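/- Let (R, m) be a commutative Noetherian local ring and M an R-module of Krull dimension n such that H^n_m(M) ≠ 0, and let I be an ideal of R with dim(R/(I + Ann M)) = 1, where Ann M is the annihilator of M. Then cd(I,M) = n − 1 or cd(I,M) = n. -/

import Mathlib

universe u

open CategoryTheory

/-- The cohomological dimension of `M` with respect to `I`:
`cd(I,M) = sup { i ∈ ℕ | H^i_I(M) ≠ 0 }`, as an element of `ℕ∞`. -/
noncomputable def cohomologicalDimension {R : Type u} [CommRing R] (I : Ideal R)
    (M : ModuleCat.{u} R) : ℕ∞ :=
  sSup {c : ℕ∞ | ∃ i : ℕ, c = i ∧ Nontrivial ((localCohomology I i).obj M)}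

/-!
For an injective resolution `Q` of `M`, the modules `Γ_I(Q)` are injective and compute `H_I(M)`,
and `Γ_{I + (x)} = Γ_I ∩ Γ_{(x)}`. Given a cocycle of `Γ_{I + (x)}(Q)` that bounds in `Γ_I(Q)`,
injectivity allows division by powers of `x`, which moves the bounding cochain into
`Γ_{I + (x)}(Q)` as soon as the local cohomology one degree below is `x`-power torsion. Hence
adding an element to `I` raises the cohomological dimension by at most one, and not at all if the
element annihilates `M`. A system of parameters of `R ⧸ (I + Ann M)` leads from `I` to the maximal
ideal, which gives the lower bound on `cd(I, M)`; the upper bound is Grothendieck's vanishing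
theorem.
-/

universe v w

section ExtComparison

open Opposite HomologicalComplex

variable {R : Type*} [CommRing R]

lemma exists_iCycles_apply_eq (K : CochainComplex (ModuleCat.{v} R) ℕ) {n : ℕ} {x : K.X n}
    (hx : K.d n (n + 1) x = 0) : ∃ z : K.cycles n, K.iCycles n z = x :=
  have isExact := ShortComplex.exact_of_f_is_kernel
    (ShortComplex.mk _ _ (K.iCycles_d n (n + 1))) (K.cyclesIsKernel n _ (by simp))
  (ShortComplex.moduleCat_exact_iff _).1 isExact x hx

lemma homologyπ_apply_eq_zero_iff (K : CochainComplex (ModuleCat.{v} R) ℕ) {n : ℕ}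
    (z : K.cycles n) :
    K.homologyπ n z = 0 ↔ ∃ (p : ℕ) (y : K.X p), K.d p n y = K.iCycles n z := by
  constructor
  · intro hz
    have isExact := ShortComplex.exact_of_g_is_cokernel (ShortComplex.mk _ _
      (K.toCycles_comp_homologyπ ((ComplexShape.up ℕ).prev n) n)) (K.homologyIsCokernel _ n rfl)
    obtain ⟨y, rfl⟩ := (ShortComplex.moduleCat_exact_iff _).1 isExact z hz
    exact ⟨_, y, congr($(K.toCycles_i _ n) y).symm⟩
  · rintro ⟨p, y, hy⟩
    have iCycles_injective := (ModuleCat.mono_iff_injective (K.iCycles n)).1 inferInstance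
    obtain rfl : K.toCycles p n y = z :=
      iCycles_injective (congr($(K.toCycles_i p n) y).trans hy)
    exact congr($(K.toCycles_comp_homologyπ p n) y)

variable {C : Type*} [Category.{v} C] [Abelian C] [Linear R C]

/-- The cochain map `Hom(L, Y) ⟶ Hom(K, Y)` given by precomposition with a chain map `K ⟶ L`. -/
abbrev linearYonedaObjMap {K L : ChainComplex C ℕ} (φ : K ⟶ L) (Y : C) :
    L.linearYonedaObj R Y ⟶ K.linearYonedaObj R Y :=
  (unopFunctor _ _).map
    (((((linearYoneda R C).obj Y).rightOp.mapHomologicalComplex _).map φ).op)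

variable {X X' Y : C} {n : ℕ}

lemma isoExt_hom_naturality [EnoughProjectives C] {g : X' ⟶ X} {P' : ProjectiveResolution X'}
    {P : ProjectiveResolution X} (φ : P'.Hom P g) (n : ℕ) (Y : C) :
    ((Ext R C n).map g.op).app Y ≫ (P'.isoExt n Y).hom =
      (P.isoExt n Y).hom ≫ homologyMap (linearYonedaObjMap φ.hom Y) n := by
  have derived_square := congrArg Quiver.Hom.unop
    (ProjectiveResolution.isoLeftDerivedObj_inv_naturality g P' P φ.hom
      (by simpa using φ.hom_f_zero_comp_π_f_zero) ((linearYoneda R C).obj Y).rightOp n)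
  have op_square :=
    (CommSq.mk (homologyOp_hom_naturality (linearYonedaObjMap (R := R) φ.hom Y) n)).vert_inv.unop
  exact ((CommSq.mk derived_square).vert_comp op_square).w

-- Quantifying over the degree `p`, which matters only for `p + 1 = n`, covers the case `n = 0`, in
-- which only `0` is a coboundary.
lemma projectiveResolution_extMk_eq_zero_iff [HasExt.{w} C] (P : ProjectiveResolution X)
    {f : P.complex.X n ⟶ Y} (hf : P.complex.d (n + 1) n ≫ f = 0) :
    P.extMk f (n + 1) rfl hf = 0 ↔
      ∃ (p : ℕ) (g : P.complex.X p ⟶ Y), P.complex.d n p ≫ g = f := by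
  cases n with
  | zero =>
    have coboundary_iff :
        (∃ (p : ℕ) (g : P.complex.X p ⟶ Y), P.complex.d 0 p ≫ g = f) ↔ f = 0 := by
      simp [eq_comm]
    rw [coboundary_iff]
    refine ⟨fun h ↦ ?_, by rintro rfl; simp⟩
    rw [← P.extEquivCohomologyClass.apply_eq_iff_eq,
      ProjectiveResolution.extEquivCohomologyClass_extMk,
      ProjectiveResolution.extEquivCohomologyClass_zero,
      CochainComplex.HomComplex.CohomologyClass.mk_eq_zero_iff,
      CochainComplex.HomComplex.Cocycle.toSingleMk_mem_coboundaries_iff _ _ _ _ _ 1 (by simp)] at h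
    obtain ⟨g, hg⟩ := h
    rw [(P.cochainComplex.isZero_of_isStrictlyLE 0 1).eq_of_src g 0] at hg
    simpa using hg.symm
  | succ n =>
    rw [P.extMk_eq_zero_iff f (n + 2) rfl hf n rfl]
    refine ⟨fun ⟨g, hg⟩ ↦ ⟨n, g, hg⟩, fun ⟨p, g, hg⟩ ↦ ?_⟩
    obtain rfl | hp := eq_or_ne p n
    · exact ⟨g, hg⟩
    · rw [P.complex.shape _ _ (by simpa using hp), Limits.zero_comp] at hg
      exact ⟨0, by simp [hg]⟩

/-- The inclusion of the degree `n` cocycles of `Hom(K, Y)` into the morphisms `K.X n ⟶ Y`. -/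
noncomputable def cyclesToHom (K : ChainComplex C ℕ) (n : ℕ) (Y : C) :
    (K.linearYonedaObj R Y).cycles n →ₗ[R] (K.X n ⟶ Y) :=
  ((K.linearYonedaObj R Y).iCycles n).hom

lemma d_comp_cyclesToHom (K : ChainComplex C ℕ) (z : (K.linearYonedaObj R Y).cycles n) :
    K.d (n + 1) n ≫ cyclesToHom K n Y z = 0 :=
  congr($((K.linearYonedaObj R Y).iCycles_d n (n + 1)) z)

lemma smul_extMk [HasExt.{w} C] (P : ProjectiveResolution X) (r : R)
    {f : P.complex.X n ⟶ Y} (hf : P.complex.d (n + 1) n ≫ f = 0) :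
    r • P.extMk f (n + 1) rfl hf = P.extMk (r • f) (n + 1) rfl (by simp [hf]) := by
  simp [Abelian.Ext.smul_eq_comp_mk₀, P.extMk_comp_mk₀]

/-- The class in `Abelian.Ext X Y n` of an `n`-cocycle of `Hom(P, Y)`, where `P` is a projective
resolution of `X`. -/
noncomputable def cyclesToExt [HasExt.{w} C] (P : ProjectiveResolution X) (n : ℕ) (Y : C) :
    (P.complex.linearYonedaObj R Y).cycles n →ₗ[R] Abelian.Ext X Y n where
  toFun z := P.extMk _ (n + 1) rfl (d_comp_cyclesToHom P.complex z)
  map_add' y z := by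
    simp only [map_add, P.add_extMk]
  map_smul' r z := by
    simp only [map_smul, RingHom.id_apply, smul_extMk]

lemma cyclesToExt_surjective [HasExt.{w} C] (P : ProjectiveResolution X) (n : ℕ) (Y : C) :
    Function.Surjective (cyclesToExt (R := R) P n Y) := by
  intro ξ
  obtain ⟨f, hf, rfl⟩ := P.extMk_surjective ξ (n + 1) rfl
  obtain ⟨z, rfl⟩ := exists_iCycles_apply_eq (P.complex.linearYonedaObj R Y) hf
  exact ⟨z, rfl⟩

lemma ker_cyclesToExt [HasExt.{w} C] (P : ProjectiveResolution X) (n : ℕ) (Y : C) :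
    LinearMap.ker (cyclesToExt (R := R) P n Y) =
      LinearMap.ker ((P.complex.linearYonedaObj R Y).homologyπ n).hom := by
  ext z
  exact (projectiveResolution_extMk_eq_zero_iff P (d_comp_cyclesToHom P.complex z)).trans
    (homologyπ_apply_eq_zero_iff _ z).symm

/-- The comparison of the `Ext` groups of the derived category with the derived functors `Ext R C n`
through which Mathlib defines `localCohomology`: both are the cohomology of `Hom(P, Y)`. -/
noncomputable def extLinearEquiv [EnoughProjectives C] [HasExt.{w} C] (P : ProjectiveResolution X)
    (n : ℕ) (Y : C) : Abelian.Ext X Y n ≃ₗ[R] ((Ext R C n).obj (op X)).obj Y :=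
  (LinearMap.quotKerEquivOfSurjective _ (cyclesToExt_surjective P n Y)).symm ≪≫ₗ
    Submodule.quotEquivOfEq _ _ (ker_cyclesToExt P n Y) ≪≫ₗ
    LinearMap.quotKerEquivOfSurjective _ ((ModuleCat.epi_iff_surjective _).1 inferInstance) ≪≫ₗ
    (P.isoExt n Y).symm.toLinearEquiv

lemma extLinearEquiv_cyclesToExt [EnoughProjectives C] [HasExt.{w} C] (P : ProjectiveResolution X)
    (z : (P.complex.linearYonedaObj R Y).cycles n) :
    extLinearEquiv P n Y (cyclesToExt P n Y z) =
      (P.isoExt n Y).inv ((P.complex.linearYonedaObj R Y).homologyπ n z) := by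
  simp [extLinearEquiv]

lemma mk₀_comp_cyclesToExt [HasExt.{w} C] {g : X' ⟶ X} {P' : ProjectiveResolution X'}
    {P : ProjectiveResolution X} (φ : P'.Hom P g) (z : (P.complex.linearYonedaObj R Y).cycles n) :
    (Abelian.Ext.mk₀ g).comp (cyclesToExt P n Y z) (zero_add n) =
      cyclesToExt P' n Y (cyclesMap (linearYonedaObjMap φ.hom Y) n z) := by
  refine (ProjectiveResolution.mk₀_comp_extMk _ _ rfl (d_comp_cyclesToHom _ z) φ).trans ?_
  congr 1
  exact congr($(cyclesMap_i (linearYonedaObjMap φ.hom Y) n) z).symm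

lemma extLinearEquiv_mk₀_comp [EnoughProjectives C] [HasExt.{w} C] (g : X' ⟶ X)
    (P' : ProjectiveResolution X') (P : ProjectiveResolution X) (ξ : Abelian.Ext X Y n) :
    extLinearEquiv P' n Y ((Abelian.Ext.mk₀ g).comp ξ (zero_add n)) =
      ((Ext R C n).map g.op).app Y (extLinearEquiv P n Y ξ) := by
  let φ : P'.Hom P g := ⟨ProjectiveResolution.lift g P' P, by
    simpa using ProjectiveResolution.lift_commutes_zero g P' P⟩
  have isoExt_square := (CommSq.mk (isoExt_hom_naturality (R := R) φ n Y)).flip.horiz_inv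
  have square := (CommSq.mk
    (homologyπ_naturality (linearYonedaObjMap (R := R) φ.hom Y) n)).horiz_comp isoExt_square
  obtain ⟨z, rfl⟩ := cyclesToExt_surjective (R := R) P n Y ξ
  rw [mk₀_comp_cyclesToExt φ, extLinearEquiv_cyclesToExt, extLinearEquiv_cyclesToExt]
  exact congr($square.w.symm z)

end ExtComparison

section ColimitOfExt

open Opposite Limits Abelian

variable {R : Type u} [CommRing R] (I : Ideal R)

/-- The `R`-module `R ⧸ I ^ t`. -/
abbrev powQuotient (t : ℕ) : ModuleCat.{u} R := ModuleCat.of R (R ⧸ I ^ t)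

/-- The projection `R ⧸ I ^ s ⟶ R ⧸ I ^ t` for `t ≤ s`. -/
abbrev powQuotientMap {t s : ℕ} (h : t ≤ s) : powQuotient I s ⟶ powQuotient I t :=
  ModuleCat.ofHom (Submodule.factor (Ideal.pow_le_pow_right h))

/-- The structure map `Ext^i(R ⧸ I ^ t, M) → H^i_I(M)` of the colimit defining local cohomology. -/
noncomputable def extToLocalCohomology (t i : ℕ) (M : ModuleCat.{u} R) :
    Ext (powQuotient I t) M i →ₗ[R] (localCohomology I i).obj M :=
  ((colimit.ι (localCohomology.diagram (localCohomology.idealPowersDiagram I) i)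
    (op (op t))).app M).hom ∘ₗ
    (extLinearEquiv (projectiveResolution (powQuotient I t)) i M).toLinearMap

/-- Evaluation at `M` of the colimit of functors defining `H^i_I` is the colimit of the modules
`Ext^i(R ⧸ I ^ t, M)`. -/
noncomputable def isColimitLocalCohomologyObj (i : ℕ) (M : ModuleCat.{u} R) :
    IsColimit (((evaluation _ _).obj M).mapCocone (colimit.cocone
      (localCohomology.diagram (localCohomology.idealPowersDiagram I) i))) :=
  isColimitOfPreserves ((evaluation _ _).obj M) (colimit.isColimit _)

lemma preservesFilteredColimits_forget_moduleCat :
    PreservesFilteredColimitsOfSize.{0, 0} (forget (ModuleCat.{u} R)) :=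
  preservesSmallestFilteredColimits_of_preservesFilteredColimits.{u, u} _

lemma exists_extToLocalCohomology_eq {i : ℕ} {M : ModuleCat.{u} R}
    (c : (localCohomology I i).obj M) :
    ∃ (t : ℕ) (ξ : Ext (powQuotient I t) M i), extToLocalCohomology I t i M ξ = c := by
  have := preservesFilteredColimits_forget_moduleCat (R := R)
  obtain ⟨t, η, rfl⟩ := Concrete.isColimit_exists_rep _ (isColimitLocalCohomologyObj I i M) c
  refine ⟨t.unop.unop, (extLinearEquiv (projectiveResolution _) i M).symm η, ?_⟩
  exact congrArg _ (LinearEquiv.apply_symm_apply _ η)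

lemma isColimit_ι_app_apply_eq_zero_iff {J : Type*} [Category* J] [IsFiltered J]
    {F : J ⥤ ModuleCat.{v} R} [PreservesColimit F (forget (ModuleCat.{v} R))] {c : Cocone F}
    (hc : IsColimit c) {j : J} (x : F.obj j) :
    c.ι.app j x = 0 ↔ ∃ (k : J) (f : j ⟶ k), F.map f x = 0 := by
  constructor
  · intro hx
    obtain ⟨k, f, g, hfg⟩ := (Concrete.isColimit_rep_eq_iff_exists F hc (i := j) (j := j) x 0).1
      (hx.trans (map_zero _).symm)
    exact ⟨k, f, hfg.trans (map_zero _)⟩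
  · rintro ⟨k, f, hf⟩
    rw [← c.w f, ModuleCat.comp_apply, hf, map_zero]

lemma extToLocalCohomology_eq_zero_iff {t i : ℕ} {M : ModuleCat.{u} R}
    (ξ : Ext (powQuotient I t) M i) :
    extToLocalCohomology I t i M ξ = 0 ↔
      ∃ (s : ℕ) (h : t ≤ s), (Ext.mk₀ (powQuotientMap I h)).comp ξ (zero_add i) = 0 := by
  have := preservesFilteredColimits_forget_moduleCat (R := R)
  have mk₀_comp_eq_zero_iff {s : ℕ} (h : t ≤ s) :
      (Ext.mk₀ (powQuotientMap I h)).comp ξ (zero_add i) = 0 ↔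
      ((_root_.Ext R (ModuleCat.{u} R) i).map (powQuotientMap I h).op).app M
        (extLinearEquiv (projectiveResolution _) i M ξ) = 0 := by
    rw [← extLinearEquiv_mk₀_comp _ (projectiveResolution _), LinearEquiv.map_eq_zero_iff]
  refine (isColimit_ι_app_apply_eq_zero_iff (isColimitLocalCohomologyObj I i M) (j := op (op t))
    (extLinearEquiv (projectiveResolution _) i M ξ)).trans ⟨?_, ?_⟩
  · rintro ⟨s, f, hf⟩
    exact ⟨s.unop.unop, leOfHom f.unop.unop, (mk₀_comp_eq_zero_iff _).2 hf⟩
  · rintro ⟨s, h, hs⟩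
    exact ⟨op (op s), (homOfLE h).op.op, (mk₀_comp_eq_zero_iff h).1 hs⟩

variable {I}

lemma isTorsion'_powers_localCohomology_iff {x : R} {i : ℕ} {M : ModuleCat.{u} R} :
    Module.IsTorsion' ((localCohomology I i).obj M) (Submonoid.powers x) ↔
      ∀ (t : ℕ) (ξ : Ext (powQuotient I t) M i), ∃ (s : ℕ) (h : t ≤ s) (k : ℕ),
        x ^ k • (Ext.mk₀ (powQuotientMap I h)).comp ξ (zero_add i) = 0 := by
  rw [Submodule.isTorsion'_powers_iff]
  constructor
  · intro tors t ξ
    obtain ⟨k, hk⟩ := tors (extToLocalCohomology I t i M ξ)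
    obtain ⟨s, h, hs⟩ := (extToLocalCohomology_eq_zero_iff I (x ^ k • ξ)).1
      ((map_smul _ _ _).trans hk)
    exact ⟨s, h, k, by rwa [← Ext.comp_smul]⟩
  · intro H c
    obtain ⟨t, ξ, rfl⟩ := exists_extToLocalCohomology_eq I c
    obtain ⟨s, h, k, hk⟩ := H t ξ
    refine ⟨k, (map_smul _ _ _).symm.trans ?_⟩
    exact (extToLocalCohomology_eq_zero_iff I (x ^ k • ξ)).2 ⟨s, h, by rwa [Ext.comp_smul]⟩

lemma subsingleton_iff_isTorsion'_powers_one {M : Type*} [AddCommGroup M] [Module R M] :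
    Subsingleton M ↔ Module.IsTorsion' M (Submonoid.powers (1 : R)) := by
  simp [Module.IsTorsion', subsingleton_iff_forall_eq (0 : M)]

lemma subsingleton_localCohomology_iff {i : ℕ} {M : ModuleCat.{u} R} :
    Subsingleton ((localCohomology I i).obj M) ↔
      ∀ (t : ℕ) (ξ : Ext (powQuotient I t) M i), ∃ (s : ℕ) (h : t ≤ s),
        (Ext.mk₀ (powQuotientMap I h)).comp ξ (zero_add i) = 0 := by
  simp [subsingleton_iff_isTorsion'_powers_one (R := R), isTorsion'_powers_localCohomology_iff]

end ColimitOfExt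

section InjectiveResolution

open Ideal Submodule

lemma injectiveResolution_extMk_eq_zero_iff {C : Type*} [Category.{v} C] [Abelian C]
    [HasExt.{w} C] {X Y : C} (Q : InjectiveResolution Y) {n : ℕ} {f : X ⟶ Q.cocomplex.X n}
    (hf : f ≫ Q.cocomplex.d n (n + 1) = 0) :
    Q.extMk f (n + 1) rfl hf = 0 ↔
      ∃ (p : ℕ) (g : X ⟶ Q.cocomplex.X p), g ≫ Q.cocomplex.d p n = f := by
  cases n with
  | zero =>
    have coboundary_iff :
        (∃ (p : ℕ) (g : X ⟶ Q.cocomplex.X p), g ≫ Q.cocomplex.d p 0 = f) ↔ f = 0 := by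
      simp [eq_comm]
    rw [coboundary_iff]
    refine ⟨fun h ↦ ?_, by rintro rfl; simp⟩
    rw [← Q.extEquivCohomologyClass.apply_eq_iff_eq,
      InjectiveResolution.extEquivCohomologyClass_extMk,
      InjectiveResolution.extEquivCohomologyClass_zero,
      CochainComplex.HomComplex.CohomologyClass.mk_eq_zero_iff,
      CochainComplex.HomComplex.Cocycle.fromSingleMk_mem_coboundaries_iff _ _ _ _ _ (-1)
        (by simp)] at h
    obtain ⟨g, hg⟩ := h
    rw [(Q.cochainComplex.isZero_of_isStrictlyGE 0 (-1)).eq_of_tgt g 0] at hg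
    simpa using hg.symm
  | succ n =>
    rw [Q.extMk_eq_zero_iff f (n + 2) rfl hf n rfl]
    refine ⟨fun ⟨g, hg⟩ ↦ ⟨n, g, hg⟩, fun ⟨p, g, hg⟩ ↦ ?_⟩
    obtain rfl | hp := eq_or_ne p n
    · exact ⟨g, hg⟩
    · rw [Q.cocomplex.shape _ _ (by simpa using hp), Limits.comp_zero] at hg
      exact ⟨0, by simp [hg]⟩

variable {R : Type u} [CommRing R] {I : Ideal R} {t : ℕ} {M E : ModuleCat.{u} R}

lemma exists_powQuotient_hom_apply_one_eq {c : E} (hc : c ∈ torsionBySet R E ↑(I ^ t)) :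
    ∃ f : powQuotient I t ⟶ E, f (1 : R ⧸ I ^ t) = c :=
  ⟨ModuleCat.ofHom ((I ^ t).liftQ (LinearMap.toSpanSingleton R E c) fun a ha ↦
    (mem_torsionBySet_iff _ _).1 hc ⟨a, ha⟩),
    one_smul R c⟩

lemma powQuotient_hom_apply_one_mem_torsionBySet (f : powQuotient I t ⟶ E) :
    f (1 : R ⧸ I ^ t) ∈ torsionBySet R E ↑(I ^ t) := by
  refine (mem_torsionBySet_iff _ _).2 fun ⟨a, ha⟩ ↦ ?_
  have smul_one : a • (1 : R ⧸ I ^ t) = 0 :=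
    (Algebra.algebraMap_eq_smul_one a).symm.trans (Ideal.Quotient.eq_zero_iff_mem.2 ha)
  exact (map_smul f.hom a 1).symm.trans ((congrArg f smul_one).trans (map_zero f.hom))

lemma powQuotient_hom_ext {f g : powQuotient I t ⟶ E}
    (h : f (1 : R ⧸ I ^ t) = g (1 : R ⧸ I ^ t)) : f = g := by
  ext
  exact h

lemma smul_mk₀_powQuotientMap_comp_extMk_eq_zero_iff (Q : InjectiveResolution M) {i s : ℕ}
    (h : t ≤ s) (a : R) {f : powQuotient I t ⟶ Q.cocomplex.X i}
    (hf : f ≫ Q.cocomplex.d i (i + 1) = 0) :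
    a • (Abelian.Ext.mk₀ (powQuotientMap I h)).comp (Q.extMk f (i + 1) rfl hf) (zero_add i) = 0 ↔
      ∃ j, ∃ w ∈ torsionBySet R (Q.cocomplex.X j) ↑(I ^ s),
        Q.cocomplex.d j i w = a • f (1 : R ⧸ I ^ t) := by
  have smul_comp_cocycle : (a • (powQuotientMap I h ≫ f)) ≫ Q.cocomplex.d i (i + 1) = 0 := by
    simp [hf]
  have smul_comp_extMk :
      a • (Abelian.Ext.mk₀ (powQuotientMap I h)).comp (Q.extMk f (i + 1) rfl hf) (zero_add i) =
        Q.extMk _ (i + 1) rfl smul_comp_cocycle := by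
    rw [← Abelian.Ext.smul_comp, ← Abelian.Ext.mk₀_smul, Q.mk₀_comp_extMk]
    simp only [Linear.smul_comp]
  rw [smul_comp_extMk, injectiveResolution_extMk_eq_zero_iff]
  refine exists_congr fun j ↦ ⟨fun ⟨g, hg⟩ ↦ ?_, fun ⟨w, hw, hdw⟩ ↦ ?_⟩
  · exact ⟨_, powQuotient_hom_apply_one_mem_torsionBySet g, congr($hg (1 : R ⧸ I ^ s))⟩
  · obtain ⟨g, rfl⟩ := exists_powQuotient_hom_apply_one_eq hw
    exact ⟨g, powQuotient_hom_ext hdw⟩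

lemma isTorsion'_powers_localCohomology_iff_exists_d_eq (Q : InjectiveResolution M) {x : R}
    {i : ℕ} :
    Module.IsTorsion' ((localCohomology I i).obj M) (Submonoid.powers x) ↔
      ∀ c ∈ primaryComponent (Q.cocomplex.X i) I, Q.cocomplex.d i (i + 1) c = 0 →
        ∃ k j, ∃ w ∈ primaryComponent (Q.cocomplex.X j) I, Q.cocomplex.d j i w = x ^ k • c := by
  simp only [isTorsion'_powers_localCohomology_iff, primaryComponent_mem]
  constructor
  · rintro tors c ⟨t, hc⟩ hdc
    obtain ⟨f, rfl⟩ := exists_powQuotient_hom_apply_one_eq hc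
    have hf : f ≫ Q.cocomplex.d i (i + 1) = 0 := powQuotient_hom_ext hdc
    obtain ⟨s, h, k, hk⟩ := tors t (Q.extMk f (i + 1) rfl hf)
    obtain ⟨j, w, hw, hdw⟩ := (smul_mk₀_powQuotientMap_comp_extMk_eq_zero_iff Q h _ hf).1 hk
    exact ⟨k, j, w, ⟨s, hw⟩, hdw⟩
  · intro H t ξ
    obtain ⟨f, hf, rfl⟩ := Q.extMk_surjective ξ (i + 1) rfl
    obtain ⟨k, j, w, ⟨s, hw⟩, hdw⟩ := H (f (1 : R ⧸ I ^ t))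
      ⟨t, powQuotient_hom_apply_one_mem_torsionBySet f⟩ congr($hf (1 : R ⧸ I ^ t))
    refine ⟨max t s, le_max_left _ _, k, ?_⟩
    refine (smul_mk₀_powQuotientMap_comp_extMk_eq_zero_iff Q _ _ hf).2 ⟨j, w, ?_, hdw⟩
    exact torsionBySet_le_torsionBySet_of_subset
      (Ideal.pow_le_pow_right (le_max_right t s)) hw

lemma subsingleton_localCohomology_iff_exists_d_eq (Q : InjectiveResolution M) {i : ℕ} :
    Subsingleton ((localCohomology I i).obj M) ↔
      ∀ c ∈ primaryComponent (Q.cocomplex.X i) I, Q.cocomplex.d i (i + 1) c = 0 →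
        ∃ j, ∃ w ∈ primaryComponent (Q.cocomplex.X j) I, Q.cocomplex.d j i w = c := by
  simp [subsingleton_iff_isTorsion'_powers_one (R := R),
    isTorsion'_powers_localCohomology_iff_exists_d_eq Q]

end InjectiveResolution

section PrimaryComponent

open Ideal Submodule

variable {R M : Type*} [CommRing R] [AddCommGroup M] [Module R M]

lemma primaryComponent_antitone {I J : Ideal R} (h : I ≤ J) :
    primaryComponent M J ≤ primaryComponent M I :=
  iSup_mono fun t ↦ torsionBySet_le_torsionBySet_of_subset (Ideal.pow_right_mono h t)

lemma mem_primaryComponent_span_singleton_iff {x : R} {m : M} :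
    m ∈ primaryComponent M (span {x}) ↔ ∃ k : ℕ, x ^ k • m = 0 := by
  simp only [primaryComponent_mem, span_singleton_pow]
  exact exists_congr fun k ↦ by
    rw [← submodule_span_eq, torsionBySet_span_singleton_eq, mem_torsionBy_iff]

lemma primaryComponent_ideal_sup (I J : Ideal R) :
    primaryComponent M (I ⊔ J) = primaryComponent M I ⊓ primaryComponent M J := by
  refine le_antisymm
    (le_inf (primaryComponent_antitone le_sup_left) (primaryComponent_antitone le_sup_right)) ?_
  rintro m ⟨hI, hJ⟩
  obtain ⟨s, hs⟩ := (primaryComponent_mem _ _ m).1 hI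
  obtain ⟨t, ht⟩ := (primaryComponent_mem _ _ m).1 hJ
  refine (primaryComponent_mem _ _ m).2 ⟨s + t, (mem_torsionBySet_iff _ _).2 fun ⟨a, ha⟩ ↦ ?_⟩
  obtain ⟨b, hb, c, hc, rfl⟩ := Submodule.mem_sup.1 (Ideal.sup_pow_add_le_pow_sup_pow ha)
  exact (add_smul b c m).trans (by
    rw [(mem_torsionBySet_iff _ _).1 hs ⟨b, hb⟩, (mem_torsionBySet_iff _ _).1 ht ⟨c, hc⟩, add_zero])

lemma exists_pow_le_annihilator_of_fg {I : Ideal R} {N : Submodule R M} (hN : N.FG)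
    (h : N ≤ primaryComponent M I) : ∃ t : ℕ, I ^ t ≤ N.annihilator := by
  obtain ⟨s, hs⟩ := CompleteLattice.IsCompactElement.exists_finset_of_le_iSup _
    ((fg_iff_compact N).1 hN) _ h
  refine ⟨s.sup id, fun a ha ↦ mem_annihilator.2 fun m hm ↦ ?_⟩
  have iSup_le : ⨆ t ∈ s, torsionBySet R M ↑(I ^ t) ≤ torsionBySet R M ↑(I ^ s.sup id) :=
    iSup₂_le fun t ht ↦ torsionBySet_le_torsionBySet_pow t _ (Finset.le_sup (f := id) ht) I
  exact (mem_torsionBySet_iff _ _).1 (iSup_le (hs hm)) ⟨a, ha⟩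

lemma exists_apply_eq_zero_of_mem_pow_smul_top [IsNoetherianRing R] [Module.Finite R M]
    {P : Type*} [AddCommGroup P] [Module R P] {I : Ideal R} {N : Submodule R M} {t : ℕ}
    {g : N →ₗ[R] P} (hg : I ^ t ≤ (LinearMap.range g).annihilator) :
    ∃ n : ℕ, ∀ y : N, (y : M) ∈ (I ^ n • ⊤ : Submodule R M) → g y = 0 := by
  obtain ⟨k, hk⟩ := I.exists_pow_inf_eq_pow_smul N
  refine ⟨k + t, fun y hy ↦ ?_⟩
  have mem_smul : (y : M) ∈ I ^ t • N := by
    have artin_rees := (hk (k + t) (Nat.le_add_right k t)).le ⟨hy, y.2⟩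
    rw [Nat.add_sub_cancel_left] at artin_rees
    exact (smul_mono_right (I ^ t) inf_le_right : I ^ t • (I ^ k • ⊤ ⊓ N) ≤ _) artin_rees
  have map_eq_bot : (I ^ t • ⊤ : Submodule R N).map g = ⊥ := by
    rw [map_smul'', Submodule.map_top, ← le_annihilator_iff]
    exact hg
  exact map_le_iff_le_comap.1 map_eq_bot.le ((mem_smul_top_iff (I ^ t) N y).2 mem_smul)

end PrimaryComponent

section InjectiveModule

open Ideal Submodule

variable {R : Type u} [CommRing R] [Small.{v} R] {E : Type v} [AddCommGroup E] [Module R E]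
  [Module.Injective R E]

lemma exists_comp_eq_of_ker_le_ker {X Y : Type*} [AddCommGroup X] [Module R X] [AddCommGroup Y]
    [Module R Y] {f : X →ₗ[R] Y} {g : X →ₗ[R] E} (h : LinearMap.ker f ≤ LinearMap.ker g) :
    ∃ φ : Y →ₗ[R] E, φ ∘ₗ f = g := by
  obtain ⟨φ, hφ⟩ := Module.Injective.extension_property R E _ _
    ((LinearMap.ker f).liftQ f le_rfl)
    (LinearMap.ker_eq_bot.1 (ker_liftQ_eq_bot _ _ _ le_rfl)) ((LinearMap.ker f).liftQ g h)
  exact ⟨φ, by rw [← liftQ_mkQ _ f le_rfl, ← LinearMap.comp_assoc, hφ, liftQ_mkQ]⟩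

lemma injective_primaryComponent [IsNoetherianRing R] (I : Ideal R) :
    Module.Injective R (primaryComponent E I) := by
  refine Module.Baer.iff_injective.1 fun J g ↦ ?_
  obtain ⟨t, ht⟩ := exists_pow_le_annihilator_of_fg (I := I)
    (N := LinearMap.range ((primaryComponent E I).subtype ∘ₗ g))
    (Module.Finite.iff_fg.1 inferInstance) (by rintro _ ⟨y, rfl⟩; exact (g y).2)
  -- By Artin–Rees `g` factors through the image of `J` in `R ⧸ I ^ n`, so that its extension along
  -- `J ⊆ R` can be chosen to vanish on `I ^ n`, that is, with values in the `I`-primary component.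
  obtain ⟨n, hn⟩ := exists_apply_eq_zero_of_mem_pow_smul_top ht
  obtain ⟨φ, hφ⟩ := exists_comp_eq_of_ker_le_ker (f := (I ^ n).mkQ ∘ₗ J.subtype)
    (g := (primaryComponent E I).subtype ∘ₗ g) fun y hy ↦ hn y (by
      simpa [Ideal.Quotient.eq_zero_iff_mem] using hy)
  have φ_one_mem : φ ((I ^ n).mkQ 1) ∈ primaryComponent E I := by
    refine (primaryComponent_mem _ _ _).2 ⟨n, (mem_torsionBySet_iff _ _).2 fun ⟨a, ha⟩ ↦ ?_⟩
    exact (map_smul (φ ∘ₗ (I ^ n).mkQ) a 1).symm.trans (by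
      simp [Ideal.Quotient.eq_zero_iff_mem.2 ha])
  refine ⟨LinearMap.toSpanSingleton R _ ⟨_, φ_one_mem⟩, fun y hy ↦ Subtype.ext ?_⟩
  have apply_mkQ : φ ((I ^ n).mkQ y) = g ⟨y, hy⟩ := congr($hφ ⟨y, hy⟩)
  rw [← apply_mkQ]
  refine (map_smul (φ ∘ₗ (I ^ n).mkQ) y 1).symm.trans ?_
  rw [smul_eq_mul, mul_one, LinearMap.comp_apply]

lemma exists_pow_add_smul_eq_pow_smul_of_injective [IsNoetherianRing R] (x : R) (w : E) (k : ℕ) :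
    ∃ (l : ℕ) (v : E), x ^ (k + l) • v = x ^ l • w := by
  obtain ⟨l, hl⟩ := monotone_stabilizes_iff_noetherian.2 (inferInstanceAs (IsNoetherian R R))
    (LinearMap.mulLeft R x).iterateKer
  obtain ⟨φ, hφ⟩ := exists_comp_eq_of_ker_le_ker (f := LinearMap.mulLeft R (x ^ (k + l)))
    (g := LinearMap.toSpanSingleton R E (x ^ l • w)) fun r hr ↦ by
      have : r ∈ (LinearMap.mulLeft R x).iterateKer (k + l) := by
        simpa using hr
      rw [← hl _ (Nat.le_add_left l k)] at this
      have hr' : x ^ l * r = 0 := by simpa using this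
      simp [smul_smul, mul_comm r, hr']
  refine ⟨l, φ 1, ?_⟩
  have apply_pow : φ (x ^ (k + l) * 1) = (1 : R) • x ^ l • w := congr($hφ 1)
  rwa [← smul_eq_mul, map_smul, one_smul] at apply_pow

end InjectiveModule

section EnlargeIdeal

open Ideal

variable {R : Type u} [CommRing R] {I J : Ideal R} {x : R} {i : ℕ} {M : ModuleCat.{u} R}

lemma subsingleton_localCohomology_zero_of_le (h : I ≤ J)
    (hI : Subsingleton ((localCohomology I 0).obj M)) :
    Subsingleton ((localCohomology J 0).obj M) := by
  let Q := injectiveResolution M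
  rw [subsingleton_localCohomology_iff_exists_d_eq Q] at hI ⊢
  intro c hc hdc
  obtain ⟨j, w, -, rfl⟩ := hI c (primaryComponent_antitone h hc) hdc
  exact ⟨0, 0, zero_mem _, by simp⟩

lemma smul_id_eq_zero_of_mem_annihilator (hx : x ∈ Module.annihilator R M) : x • 𝟙 M = 0 :=
  ModuleCat.hom_ext (LinearMap.ext (Module.mem_annihilator.1 hx))

lemma isTorsion'_powers_localCohomology_of_mem_annihilator (hx : x ∈ Module.annihilator R M) :
    Module.IsTorsion' ((localCohomology I i).obj M) (Submonoid.powers x) := by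
  refine isTorsion'_powers_localCohomology_iff.2 fun t ξ ↦ ⟨t, le_rfl, 1, ?_⟩
  rw [pow_one, Abelian.Ext.smul_eq_comp_mk₀, smul_id_eq_zero_of_mem_annihilator hx,
    Abelian.Ext.mk₀_zero, Abelian.Ext.comp_zero]

variable [IsNoetherianRing R]

lemma exists_mem_primaryComponent_sup_span_singleton_d_eq (Q : InjectiveResolution M)
    (tors : Module.IsTorsion' ((localCohomology I i).obj M) (Submonoid.powers x))
    {y : Q.cocomplex.X i} (hy : y ∈ primaryComponent (Q.cocomplex.X i) I) {k : ℕ}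
    (hdy : x ^ k • Q.cocomplex.d i (i + 1) y = 0) :
    ∃ y' ∈ primaryComponent (Q.cocomplex.X i) (I ⊔ span {x}),
      Q.cocomplex.d i (i + 1) y' = Q.cocomplex.d i (i + 1) y := by
  obtain ⟨k', j, w, hw, hdw⟩ := (isTorsion'_powers_localCohomology_iff_exists_d_eq Q).1 tors
    (x ^ k • y) (Submodule.smul_mem _ _ hy) ((map_smul _ _ _).trans hdy)
  have : Injective (ModuleCat.of R (Q.cocomplex.X j)) := Q.injective j
  have := Module.injective_module_of_injective_object R (Q.cocomplex.X j)
  have := injective_primaryComponent (E := Q.cocomplex.X j) I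
  -- Dividing `w` by `x ^ (k' + k)`, up to a power of `x`, gives a `v` whose coboundary agrees with
  -- `y` up to `x`-power torsion.
  obtain ⟨l, v, hv⟩ :=
    exists_pow_add_smul_eq_pow_smul_of_injective x (⟨w, hw⟩ : primaryComponent _ I) (k' + k)
  have hdv : x ^ (k' + k + l) • Q.cocomplex.d j i v = x ^ (k' + k + l) • y := by
    calc x ^ (k' + k + l) • Q.cocomplex.d j i v
      _ = Q.cocomplex.d j i (x ^ (k' + k + l) • (v : Q.cocomplex.X j)) := (map_smul _ _ _).symm
      _ = Q.cocomplex.d j i (x ^ l • w) := congrArg _ congr(($hv : Q.cocomplex.X j))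
      _ = x ^ l • x ^ k' • x ^ k • y := by rw [map_smul, hdw]
      _ = x ^ (k' + k + l) • y := by simp only [smul_smul]; congr 1; ring
  refine ⟨y - Q.cocomplex.d j i v, ?_, ?_⟩
  · rw [primaryComponent_ideal_sup]
    refine ⟨sub_mem hy (primaryComponent_map_mem I (Q.cocomplex.d j i).hom v),
      mem_primaryComponent_span_singleton_iff.2 ⟨k' + k + l, ?_⟩⟩
    rw [smul_sub, hdv, sub_self]
  · rw [map_sub, sub_eq_self]
    exact congr($(Q.cocomplex.d_comp_d j i (i + 1)) v)

lemma subsingleton_localCohomology_sup_span_singleton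
    (tors : Module.IsTorsion' ((localCohomology I i).obj M) (Submonoid.powers x))
    (h : Subsingleton ((localCohomology I (i + 1)).obj M)) :
    Subsingleton ((localCohomology (I ⊔ span {x}) (i + 1)).obj M) := by
  let Q := injectiveResolution M
  rw [subsingleton_localCohomology_iff_exists_d_eq Q] at h ⊢
  intro c hc hdc
  rw [primaryComponent_ideal_sup] at hc
  obtain ⟨j, y, hy, rfl⟩ := h c hc.1 hdc
  obtain ⟨k, hk⟩ := mem_primaryComponent_span_singleton_iff.1 hc.2
  obtain rfl | hj := eq_or_ne j i
  · exact ⟨j, exists_mem_primaryComponent_sup_span_singleton_d_eq Q tors hy hk⟩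
  · exact ⟨0, 0, zero_mem _, by simp [Q.cocomplex.shape j (i + 1) (by simpa using hj)]⟩

lemma subsingleton_localCohomology_sup_of_le_annihilator (hJ : J ≤ Module.annihilator R M)
    (h : Subsingleton ((localCohomology I i).obj M)) :
    Subsingleton ((localCohomology (I ⊔ J) i).obj M) := by
  cases i with
  | zero => exact subsingleton_localCohomology_zero_of_le le_sup_left h
  | succ i =>
    induction J, IsNoetherian.noetherian J using Submodule.fg_induction generalizing I with
    | singleton x =>
      have x_mem := hJ (Ideal.mem_span_singleton_self x)
      exact subsingleton_localCohomology_sup_span_singleton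
        (isTorsion'_powers_localCohomology_of_mem_annihilator x_mem) h
    | sup J₁ J₂ _ _ ih₁ ih₂ =>
      rw [← sup_assoc]
      exact ih₂ (le_sup_right.trans hJ) (ih₁ (le_sup_left.trans hJ) h)

end EnlargeIdeal

section GrothendieckVanishing

open Abelian

variable {R : Type u} [CommRing R] {I : Ideal R} {i : ℕ} {M : ModuleCat.{u} R}

lemma smul_ext_eq_zero_of_mem_annihilator_left {a : R} {X : ModuleCat.{u} R}
    (ha : a ∈ Module.annihilator R X) (ξ : Ext X M i) : a • ξ = 0 := by
  rw [← Ext.mk₀_id_comp ξ, ← Ext.smul_comp, ← Ext.mk₀_smul,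
    smul_id_eq_zero_of_mem_annihilator ha, Ext.mk₀_zero, Ext.zero_comp]

lemma mk₀_comp_comp_eq_zero {X X' N : ModuleCat.{u} R} {f : X' ⟶ X} {ξ : Ext X M i}
    (hξ : (Ext.mk₀ f).comp ξ (zero_add i) = 0) {a j : ℕ} (α : Ext M N a) (hj : i + a = j) :
    (Ext.mk₀ f).comp (ξ.comp α hj) (zero_add j) = 0 := by
  rw [← Ext.comp_assoc _ _ _ (zero_add i) hj (by lia), hξ, Ext.zero_comp]

lemma subsingleton_localCohomology_of_subsingleton [Subsingleton M] :
    Subsingleton ((localCohomology I i).obj M) := by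
  refine subsingleton_iff_isTorsion'_powers_one.2
    (isTorsion'_powers_localCohomology_of_mem_annihilator ?_)
  exact Module.mem_annihilator.2 fun _ ↦ Subsingleton.elim _ _

lemma subsingleton_localCohomology_of_shortExact {S : ShortComplex (ModuleCat.{u} R)}
    (hS : S.ShortExact) (h₁ : Subsingleton ((localCohomology I i).obj S.X₁))
    (h₃ : Subsingleton ((localCohomology I i).obj S.X₃)) :
    Subsingleton ((localCohomology I i).obj S.X₂) := by
  rw [subsingleton_localCohomology_iff] at h₁ h₃ ⊢
  intro t ξ
  obtain ⟨s, hs, hξ⟩ := h₃ t (ξ.comp (Ext.mk₀ S.g) (add_zero i))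
  rw [← Ext.comp_assoc _ _ _ (zero_add i) (add_zero i) (by lia)] at hξ
  obtain ⟨η, hη⟩ := Ext.covariant_sequence_exact₂ _ hS _ hξ
  obtain ⟨r, hr, hηr⟩ := h₁ s η
  refine ⟨r, hs.trans hr, ?_⟩
  have factor : powQuotientMap I (hs.trans hr) = powQuotientMap I hr ≫ powQuotientMap I hs := by
    ext; rfl
  rw [factor, ← Ext.mk₀_comp_mk₀_assoc, ← hη, mk₀_comp_comp_eq_zero hηr]

lemma subsingleton_localCohomology_bot_succ :
    Subsingleton ((localCohomology (⊥ : Ideal R) (i + 1)).obj M) := by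
  refine subsingleton_localCohomology_iff.2 fun t ξ ↦ ⟨t + 1, t.le_succ, ?_⟩
  have pow_eq_bot : (⊥ : Ideal R) ^ (t + 1) = ⊥ := by simp [Submodule.bot_pow]
  have : Module.Projective R (R ⧸ (⊥ : Ideal R) ^ (t + 1)) :=
    Module.Projective.of_equiv (Submodule.quotEquivOfEqBot _ pow_eq_bot).symm
  have : Projective (powQuotient (⊥ : Ideal R) (t + 1)) :=
    (IsProjective.iff_projective (R := R) (R ⧸ (⊥ : Ideal R) ^ (t + 1))).1 this
  exact Ext.eq_zero_of_projective _

lemma subsingleton_localCohomology_succ_of_regular {x : R} (hx : x ∈ I) (reg : IsSMulRegular M x)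
    (h : ∀ t : ℕ, Subsingleton ((localCohomology I i).obj
      (ModuleCat.of R (QuotSMulTop (x ^ t) M)))) :
    Subsingleton ((localCohomology I (i + 1)).obj M) := by
  refine subsingleton_localCohomology_iff.2 fun t ξ ↦ ?_
  have exact_pow := (reg.pow t).smulShortComplex_shortExact
  have x_pow_mem : x ^ t ∈ Module.annihilator R (R ⧸ I ^ t) := by
    rw [Ideal.annihilator_quotient]
    exact Ideal.pow_mem_pow hx t
  have smul_eq_zero : ξ.comp (Ext.mk₀ (x ^ t • 𝟙 M)) (add_zero (i + 1)) = 0 := by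
    rw [← Ext.smul_eq_comp_mk₀, smul_ext_eq_zero_of_mem_annihilator_left x_pow_mem]
  obtain ⟨η, rfl⟩ := Ext.covariant_sequence_exact₁ _ exact_pow ξ smul_eq_zero rfl
  obtain ⟨s, hs, hη⟩ := subsingleton_localCohomology_iff.1 (h t) t η
  exact ⟨s, hs, mk₀_comp_comp_eq_zero hη _ _⟩

lemma isSMulRegular_of_linearEquiv_quotient_prime {N : Type*} [AddCommGroup N] [Module R N]
    {p : Ideal R} [p.IsPrime] (e : N ≃ₗ[R] R ⧸ p) {x : R} (hx : x ∉ p) : IsSMulRegular N x := by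
  rw [e.isSMulRegular_congr, isSMulRegular_iff_right_eq_zero_of_smul]
  intro a ha
  rw [Algebra.smul_def, mul_eq_zero] at ha
  exact ha.resolve_left fun h ↦ hx (Ideal.Quotient.eq_zero_iff_mem.1 h)

lemma supportDim_quotSMulTop_lt_of_regular {N : Type*} [AddCommGroup N] [Module R N]
    [Module.Finite R N] {x : R} (reg : IsSMulRegular N x)
    (h : Module.supportDim R N < (i + 1 : ℕ)) :
    Module.supportDim R (QuotSMulTop x N) < i := by
  have succ_le : Module.supportDim R (QuotSMulTop x N) + 1 ≤ Module.supportDim R N :=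
    Module.supportDim_quotSMulTop_succ_le_of_notMem_minimalPrimes
      fun _ hp ↦ reg.notMem_of_mem_minimalPrimes hp
  by_contra! hle
  refine absurd (succ_le.trans_lt h) (not_lt.2 ?_)
  push_cast
  gcongr

variable [IsNoetherianRing R]

lemma subsingleton_localCohomology_succ_of_le_annihilator (hI : I ≤ Module.annihilator R M) :
    Subsingleton ((localCohomology I (i + 1)).obj M) := by
  simpa using subsingleton_localCohomology_sup_of_le_annihilator hI
    (subsingleton_localCohomology_bot_succ (i := i))

lemma subsingleton_localCohomology_of_finite_of_supportDim_lt [Module.Finite R M]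
    (hM : Module.supportDim R M < i) : Subsingleton ((localCohomology I i).obj M) := by
  induction i generalizing M with
  | zero =>
    have : Subsingleton M :=
      (Module.supportDim_eq_bot_iff_subsingleton R M).1 (WithBot.lt_coe_bot.1 hM)
    exact subsingleton_localCohomology_of_subsingleton
  | succ i ih =>
    refine IsNoetherianRing.induction_on_isQuotientEquivQuotientPrime R (M := M) inferInstance
      (motive := fun N _ _ _ ↦ Module.supportDim R N < (i + 1 : ℕ) →
        Subsingleton ((localCohomology I (i + 1)).obj (ModuleCat.of R N))) ?_ ?_ ?_ hM
    · intro N _ _ _ _ _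
      exact subsingleton_localCohomology_of_subsingleton
    · intro N _ _ _ p e hN
      by_cases hp : I ≤ p.asIdeal
      · refine subsingleton_localCohomology_succ_of_le_annihilator ?_
        exact hp.trans_eq (e.annihilator_eq.trans Ideal.annihilator_quotient).symm
      · obtain ⟨x, hxI, hxp⟩ := SetLike.not_le_iff_exists.1 hp
        have reg : IsSMulRegular N x := isSMulRegular_of_linearEquiv_quotient_prime e hxp
        exact subsingleton_localCohomology_succ_of_regular hxI reg fun t ↦
          ih (supportDim_quotSMulTop_lt_of_regular (reg.pow t) hN)
    · intro N₁ _ _ _ N₂ _ _ _ N₃ _ _ _ f g hf hg hfg h₁ h₃ hN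
      have shortExact := ModuleCat.shortComplex_shortExact
        (ShortComplex.mk (ModuleCat.ofHom f) (ModuleCat.ofHom g)
          (by ext m; exact hfg.apply_apply_eq_zero m)) hfg hf hg
      exact subsingleton_localCohomology_of_shortExact shortExact
        (h₁ ((Module.supportDim_le_of_injective f hf).trans_lt hN))
        (h₃ ((Module.supportDim_le_of_surjective g hg).trans_lt hN))

lemma exists_fg_ext_comp_subtype_eq {A : ModuleCat.{u} R} [Module.Finite R A] (ξ : Ext A M i) :
    ∃ (N : Submodule R M) (_ : N.FG) (η : Ext A (ModuleCat.of R N) i),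
      η.comp (Ext.mk₀ (ModuleCat.ofHom N.subtype)) (add_zero i) = ξ := by
  induction i generalizing A with
  | zero =>
    obtain ⟨f, rfl⟩ := (Ext.mk₀_bijective _ _).2 ξ
    refine ⟨LinearMap.range f.hom, Module.Finite.iff_fg.1 inferInstance,
      Ext.mk₀ (ModuleCat.ofHom f.hom.rangeRestrict), ?_⟩
    rw [Ext.mk₀_comp_mk₀]
    rfl
  | succ i ih =>
    obtain ⟨k, g, hg⟩ := Module.Finite.exists_fin' R A
    have shortExact := LinearMap.shortExact_shortComplexKer hg
    have : Projective g.shortComplexKer.X₂ :=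
      (IsProjective.iff_projective (R := R) (Fin k → R)).1 inferInstance
    have : Module.Finite R g.shortComplexKer.X₁ :=
      inferInstanceAs (Module.Finite R (LinearMap.ker g))
    obtain ⟨ζ, rfl⟩ := Ext.contravariant_sequence_exact₃ shortExact M ξ
      (Ext.eq_zero_of_projective _) (add_comm 1 i)
    obtain ⟨N, hN, η, rfl⟩ := ih ζ
    exact ⟨N, hN, shortExact.extClass.comp η (add_comm 1 i), Ext.comp_assoc _ _ _ _ _ (by lia)⟩

lemma subsingleton_localCohomology_of_supportDim_lt (hM : Module.supportDim R M < i) :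
    Subsingleton ((localCohomology I i).obj M) := by
  refine subsingleton_localCohomology_iff.2 fun t ξ ↦ ?_
  obtain ⟨N, hN, η, rfl⟩ := exists_fg_ext_comp_subtype_eq ξ
  have : Module.Finite R N := Module.Finite.iff_fg.2 hN
  have hdim : Module.supportDim R N < i :=
    (Module.supportDim_le_of_injective N.subtype N.injective_subtype).trans_lt hM
  obtain ⟨s, hs, hη⟩ := subsingleton_localCohomology_iff.1
    (subsingleton_localCohomology_of_finite_of_supportDim_lt (M := ModuleCat.of R N) hdim) t η
  exact ⟨s, hs, mk₀_comp_comp_eq_zero hη _ _⟩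

end GrothendieckVanishing

section SystemOfParameters

open IsLocalRing

variable {R : Type*} [CommRing R] [IsLocalRing R]

lemma radical_eq_maximalIdeal_of_mem_minimalPrimes {J : Ideal R}
    (h : maximalIdeal R ∈ J.minimalPrimes) : J.radical = maximalIdeal R := by
  refine le_antisymm ((maximalIdeal.isMaximal R).isPrime.radical_le_iff.2 h.1.2) ?_
  rw [Ideal.radical_eq_sInf]
  exact le_sInf fun p ⟨hJ, hp⟩ ↦ h.2 ⟨hp, hJ⟩ (le_maximalIdeal hp.ne_top)

variable [IsNoetherianRing R]

lemma exists_finset_radical_span_eq_maximalIdeal {d : ℕ} (hd : ringKrullDim R = d) :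
    ∃ s : Finset R, s.card = d ∧ (Ideal.span (s : Set R)).radical = maximalIdeal R := by
  obtain ⟨s, hs, card_eq⟩ :=
    Ideal.exists_finset_card_eq_height_of_isNoetherianRing (maximalIdeal R)
  rw [← maximalIdeal_height_eq_ringKrullDim, ← card_eq] at hd
  exact ⟨s, by exact_mod_cast hd, radical_eq_maximalIdeal_of_mem_minimalPrimes hs⟩

lemma exists_finset_radical_sup_span_eq_maximalIdeal {I : Ideal R} {d : ℕ}
    (hd : ringKrullDim (R ⧸ I) = d) :
    ∃ s : Finset R, s.card = d ∧ (I ⊔ Ideal.span (s : Set R)).radical = maximalIdeal R := by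
  classical
  have mk_surjective := Ideal.Quotient.mk_surjective (I := I)
  have : Nontrivial (R ⧸ I) := not_subsingleton_iff_nontrivial.1 fun _ ↦
    WithBot.coe_ne_bot (hd.symm.trans ringKrullDim_eq_bot_of_subsingleton)
  have : IsLocalRing (R ⧸ I) := .of_surjective' _ mk_surjective
  have : IsLocalHom (Ideal.Quotient.mk I) := .of_surjective _ mk_surjective
  obtain ⟨s, card_eq, radical_eq⟩ := exists_finset_radical_span_eq_maximalIdeal hd
  let lift := Function.surjInv mk_surjective
  refine ⟨s.image lift, ?_, ?_⟩
  · rw [s.card_image_of_injective (Function.injective_surjInv mk_surjective), card_eq]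
  · have map_span : (Ideal.span (s.image lift : Set R)).map (Ideal.Quotient.mk I) =
        Ideal.span s := by
      rw [Ideal.map_span, Finset.coe_image, ← Set.image_comp,
        (Function.rightInverse_surjInv mk_surjective).comp_eq_id, Set.image_id]
    rw [← Ideal.comap_map_quotientMk, map_span, ← Ideal.comap_radical, radical_eq,
      maximalIdeal_comap]

end SystemOfParameters

section CohomologicalDimension

variable {R : Type u} [CommRing R] {I : Ideal R} {M : ModuleCat.{u} R} {i : ℕ}

lemma cohomologicalDimension_le_iff {c : ℕ∞} :
    cohomologicalDimension I M ≤ c ↔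
      ∀ i : ℕ, c < i → Subsingleton ((localCohomology I i).obj M) := by
  simp only [cohomologicalDimension, sSup_le_iff, Set.mem_ofPred_eq, forall_exists_index, and_imp,
    ← not_nontrivial_iff_subsingleton]
  exact ⟨fun h i hi hne ↦ (h _ i rfl hne).not_gt hi,
    fun h _ i hc hne ↦ hc ▸ not_lt.1 fun hi ↦ h i hi hne⟩

lemma subsingleton_localCohomology_of_cohomologicalDimension_lt
    (h : cohomologicalDimension I M < i) : Subsingleton ((localCohomology I i).obj M) :=
  cohomologicalDimension_le_iff.1 le_rfl i h

lemma le_cohomologicalDimension (h : Nontrivial ((localCohomology I i).obj M)) :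
    i ≤ cohomologicalDimension I M :=
  le_sSup ⟨i, rfl, h⟩

variable [IsNoetherianRing R]

lemma cohomologicalDimension_le_of_radical_eq {J : Ideal R} (h : I.radical = J.radical) :
    cohomologicalDimension J M ≤ cohomologicalDimension I M := by
  refine cohomologicalDimension_le_iff.2 fun i hi ↦ ?_
  have := subsingleton_localCohomology_of_cohomologicalDimension_lt hi
  exact ((localCohomology.isoOfSameRadical h i).app M).toLinearEquiv.symm.subsingleton

lemma cohomologicalDimension_sup_le_of_le_annihilator {J : Ideal R}
    (hJ : J ≤ Module.annihilator R M) :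
    cohomologicalDimension (I ⊔ J) M ≤ cohomologicalDimension I M :=
  cohomologicalDimension_le_iff.2 fun _ hi ↦ subsingleton_localCohomology_sup_of_le_annihilator hJ
    (subsingleton_localCohomology_of_cohomologicalDimension_lt hi)

lemma cohomologicalDimension_sup_span_singleton_le (x : R) :
    cohomologicalDimension (I ⊔ Ideal.span {x}) M ≤ cohomologicalDimension I M + 1 := by
  refine cohomologicalDimension_le_iff.2 fun i hi ↦ ?_
  obtain ⟨i, rfl⟩ : ∃ j, i = j + 1 := Nat.exists_eq_add_one.2 (by exact_mod_cast pos_of_gt hi)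
  have cd_lt : cohomologicalDimension I M < i := lt_of_add_lt_add_right (by exact_mod_cast hi)
  have := subsingleton_localCohomology_of_cohomologicalDimension_lt cd_lt
  have tors : Module.IsTorsion' ((localCohomology I i).obj M) (Submonoid.powers x) :=
    fun {c} ↦ ⟨1, Subsingleton.elim _ _⟩
  exact subsingleton_localCohomology_sup_span_singleton tors
    (subsingleton_localCohomology_of_cohomologicalDimension_lt
      (cd_lt.trans (by exact_mod_cast i.lt_succ_self)))

lemma cohomologicalDimension_sup_span_finset_le (s : Finset R) :
    cohomologicalDimension (I ⊔ Ideal.span s) M ≤ cohomologicalDimension I M + s.card := by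
  classical
  induction s using Finset.induction_on with
  | empty => simp
  | insert x s hx ih =>
    calc cohomologicalDimension (I ⊔ Ideal.span ↑(insert x s)) M
      _ = cohomologicalDimension ((I ⊔ Ideal.span s) ⊔ Ideal.span {x}) M := by
        rw [Finset.coe_insert, Ideal.span_insert, sup_comm (Ideal.span {x}), sup_assoc]
      _ ≤ cohomologicalDimension (I ⊔ Ideal.span s) M + 1 :=
        cohomologicalDimension_sup_span_singleton_le x
      _ ≤ cohomologicalDimension I M + s.card + 1 := by gcongr
      _ = cohomologicalDimension I M + (insert x s).card := by
        rw [Finset.card_insert_of_notMem hx, add_assoc, Nat.cast_add, Nat.cast_one]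

lemma cohomologicalDimension_le_of_supportDim_le {c : ℕ∞} (h : Module.supportDim R M ≤ c) :
    cohomologicalDimension I M ≤ c :=
  cohomologicalDimension_le_iff.2 fun _ hi ↦
    subsingleton_localCohomology_of_supportDim_lt (h.trans_lt (WithBot.coe_lt_coe.2 hi))

lemma cohomologicalDimension_maximalIdeal_le_add [IsLocalRing R] {d : ℕ}
    (hd : ringKrullDim (R ⧸ (I + Module.annihilator R M)) = d) :
    cohomologicalDimension (IsLocalRing.maximalIdeal R) M ≤ cohomologicalDimension I M + d := by
  obtain ⟨s, rfl, radical_eq⟩ := exists_finset_radical_sup_span_eq_maximalIdeal hd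
  calc cohomologicalDimension (IsLocalRing.maximalIdeal R) M
    _ ≤ cohomologicalDimension (I ⊔ Module.annihilator R M ⊔ Ideal.span s) M :=
      cohomologicalDimension_le_of_radical_eq
        (radical_eq.trans (IsLocalRing.maximalIdeal.isMaximal R).isPrime.radical.symm)
    _ ≤ cohomologicalDimension (I ⊔ Module.annihilator R M) M + s.card :=
      cohomologicalDimension_sup_span_finset_le s
    _ ≤ cohomologicalDimension I M + s.card := by
      gcongr
      exact cohomologicalDimension_sup_le_of_le_annihilator le_rfl

end CohomologicalDimension

theorem cd_eq_dim_sub_one_or_cd_eq_dim_general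
    (R : Type u) [CommRing R] [IsNoetherianRing R] [IsLocalRing R]
    (M : ModuleCat.{u} R) (n d : ℕ)
    (hn : Order.krullDim (Module.support R M) = (n : WithBot ℕ∞))
    (hne : Nontrivial ((localCohomology (IsLocalRing.maximalIdeal R) n).obj M))
    (I : Ideal R)
    (hd : ringKrullDim (R ⧸ (I + Module.annihilator R M)) = (d : WithBot ℕ∞)) :
    (n : ℕ∞) ≤ cohomologicalDimension I M + d ∧ cohomologicalDimension I M ≤ n :=
  ⟨(le_cohomologicalDimension hne).trans (cohomologicalDimension_maximalIdeal_le_add hd),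
    cohomologicalDimension_le_of_supportDim_le hn.le⟩

/-- over a Noetherian local ring, if `M` has Krull dimension `n` with
`H^n_m(M) ≠ 0` and `dim (R/(I + Ann M)) = 1`, then `cd(I,M) = n - 1` or `cd(I,M) = n`. -/
theorem cd_eq_dim_sub_one_or_cd_eq_dim
    (R : Type u) [CommRing R] [IsNoetherianRing R] [IsLocalRing R]
    (M : ModuleCat.{u} R) (n : ℕ)
    (hn : Order.krullDim (Module.support R M) = (n : WithBot ℕ∞))
    (hne : Nontrivial ((localCohomology (IsLocalRing.maximalIdeal R) n).obj M))
    (I : Ideal R)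
    (hd : ringKrullDim (R ⧸ (I + Module.annihilator R M)) = (1 : WithBot ℕ∞)) :
    cohomologicalDimension I M = ((n - 1 : ℕ) : ℕ∞) ∨
      cohomologicalDimension I M = (n : ℕ∞) := by
  obtain ⟨n_le, le_n⟩ := cd_eq_dim_sub_one_or_cd_eq_dim_general R M n 1 hn hne I hd
  lift cohomologicalDimension I M to ℕ using ne_top_of_le_ne_top (ENat.natCast_ne_top n) le_n with c
  norm_cast at n_le le_n ⊢
  lia
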